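/- arXiv:2210.12405 — 2 statements merged into one kernel-verified Lean document; each statement's English description precedes it below -/
import Mathlib

section
/- If A is a d-dimensional extremal (0,1)-matrix of order 2 and Λ = (λ_{i,j}) is an optimal hyperplane cover of A, then for every direction i ∈ Fin d at least one of the two weights λ_{i,0} and λ_{i,1} of the two parallel hyperplanes of direction i equals 0. -/
open Finset

/-- The sum of the entries of `k` over the hyperplane `Γ_{i,j}`. -/
def hypSum {d n : ℕ} (k : (Fin d → Fin n) → ℝ) (i : Fin d) (j : Fin n) : ℝ :=
  ∑ α ∈ Finset.univ.filter (fun α : Fin d → Fin n => α i = j), k α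

/-- `k` is a polyplex of weight `W` in the `d`-dimensional (0,1)-matrix `A` of order `n`. -/
def IsPolyplex {d n : ℕ} (A : (Fin d → Fin n) → Bool) (k : (Fin d → Fin n) → ℝ) (W : ℝ) : Prop :=
  (∀ α, 0 ≤ k α) ∧ (∀ α, A α = false → k α = 0) ∧
  (∀ i j, hypSum k i j ≤ 1) ∧ (∑ α, k α) = W

/-- `k` is a polydiagonal in `A`: a nonnegative weighting of the support whose sum over
every hyperplane equals `1`. -/
def IsPolydiagonal {d n : ℕ} (A : (Fin d → Fin n) → Bool) (k : (Fin d → Fin n) → ℝ) : Prop :=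
  (∀ α, 0 ≤ k α) ∧ (∀ α, A α = false → k α = 0) ∧ (∀ i j, hypSum k i j = 1)

def HasPolydiagonal {d n : ℕ} (A : (Fin d → Fin n) → Bool) : Prop :=
  ∃ k, IsPolydiagonal A k

/-- The matrix obtained from `A` by additionally setting the entry at `β` to `1`. -/
def addEntry {d n : ℕ} (A : (Fin d → Fin n) → Bool) (β : Fin d → Fin n) :
    (Fin d → Fin n) → Bool :=
  fun α => if α = β then true else A α

/-- `A` is extremal: it has no polydiagonal, and adding any entry creates one. -/
def IsExtremal {d n : ℕ} (A : (Fin d → Fin n) → Bool) : Prop :=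
  ¬ HasPolydiagonal A ∧ ∀ β, A β = false → HasPolydiagonal (addEntry A β)

/-- `Λ` is a hyperplane cover of `A`. -/
def IsCover {d n : ℕ} (A : (Fin d → Fin n) → Bool) (Λ : Fin d → Fin n → ℝ) : Prop :=
  (∀ i j, 0 ≤ Λ i j) ∧ ∀ α, A α = true → 1 ≤ ∑ i, Λ i (α i)

/-- The weight of a hyperplane cover. -/
def coverWeight {d n : ℕ} (Λ : Fin d → Fin n → ℝ) : ℝ := ∑ i, ∑ j, Λ i j

/-- `Λ` is an optimal hyperplane cover of `A`: a cover of minimum weight. -/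
def IsOptimalCover {d n : ℕ} (A : (Fin d → Fin n) → Bool) (Λ : Fin d → Fin n → ℝ) : Prop :=
  IsCover A Λ ∧ ∀ Λ', IsCover A Λ' → coverWeight Λ ≤ coverWeight Λ'

/-- `A` is a threshold matrix. -/
def IsThreshold {d n : ℕ} (A : (Fin d → Fin n) → Bool) : Prop :=
  ∃ Λ : Fin d → Fin n → ℝ, (∀ i j, 0 ≤ Λ i j) ∧
    ∀ α, (A α = true ↔ 1 ≤ ∑ i, Λ i (α i))

/-- `A` and `B` are equivalent: `B` is obtained from `A` by permuting directions and
permuting parallel hyperplanes, i.e. `B(α) = A(β)` where `β (π i) = σ i (α i)`. -/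
def MatEquiv {d n : ℕ} (A B : (Fin d → Fin n) → Bool) : Prop :=
  ∃ (π : Equiv.Perm (Fin d)) (σ : Fin d → Equiv.Perm (Fin n)),
    ∀ α, B α = A (fun j => σ (π.symm j) (α (π.symm j)))

/-- The rate of the hyperplane `Γ_{i,j}` of `A`: the number of ones it contains. -/
def rate {d n : ℕ} (A : (Fin d → Fin n) → Bool) (i : Fin d) (j : Fin n) : ℕ :=
  (Finset.univ.filter (fun α : Fin d → Fin n => A α = true ∧ α i = j)).card

/-- The profile of `A`: the multiset of the rates of all its `d·n` hyperplanes. -/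
def profile {d n : ℕ} (A : (Fin d → Fin n) → Bool) : Multiset ℕ :=
  (Finset.univ : Finset (Fin d × Fin n)).val.map (fun p => rate A p.1 p.2)

/-!
If `A` has no polydiagonal, the constant table `1/n` lies outside the convex hull of the incidence
tables of the support, and a separating functional is a real table `c` with `∑ c < n u` whose sum
along every index of the support is at least `u`. Subtracting from each row of `c` its minimum and
dividing by what remains of `u` gives a hyperplane cover of weight less than `n`. The same operation
applied to a cover `Λ` of weight `W < n` whose row minima add up to `s` gives a cover of weight
`(W - n s) / (1 - s)`, which is less than `W` unless `s = 0`; so the row minima of an optimal cover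
vanish.
-/

section

variable {d n : ℕ} {A : (Fin d → Fin n) → Bool}

/-- The incidence table of the index `α`: its entry at `(i, j)` is `1` if `α` lies in the hyperplane
`Γ_{i,j}` and `0` otherwise. -/
def incidence (α : Fin d → Fin n) : Fin d → Fin n → ℝ := fun i => Pi.single (α i) 1

lemma incidence_injective : Function.Injective (incidence : (Fin d → Fin n) → _) :=
  fun α _ h => funext fun i => by
    simpa [incidence, Pi.single_apply] using congrFun₂ h i (α i)

lemma sum_sum_incidence_mul (α : Fin d → Fin n) (c : Fin d → Fin n → ℝ) :
    ∑ i, ∑ j, incidence α i j * c i j = ∑ i, c i (α i) := by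
  simp [incidence, Pi.single_apply]

lemma hypSum_eq_sum_mul_incidence (k : (Fin d → Fin n) → ℝ) (i : Fin d) (j : Fin n) :
    hypSum k i j = ∑ α, k α * incidence α i j := by
  simp [hypSum, incidence, Pi.single_apply, sum_filter, eq_comm]

/-- The convex hull of the incidence tables of the support of `A`. Scaling by `n` turns
a representation of the constant table `1/n` as a convex combination of the generators into a
polydiagonal of `A`. -/
def incidencePolytope (A : (Fin d → Fin n) → Bool) : Set (Fin d → Fin n → ℝ) :=
  convexHull ℝ (incidence '' {α | A α = true})

lemma isClosed_incidencePolytope : IsClosed (incidencePolytope A) :=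
  ((Set.toFinite _).isCompact_convexHull ℝ).isClosed

lemma incidence_mem_incidencePolytope {α : Fin d → Fin n} (hα : A α = true) :
    incidence α ∈ incidencePolytope A :=
  subset_convexHull ℝ _ (Set.mem_image_of_mem _ hα)

lemma exists_weights_of_mem_incidencePolytope {x : Fin d → Fin n → ℝ}
    (hx : x ∈ incidencePolytope A) :
    ∃ k : (Fin d → Fin n) → ℝ,
      (∀ α, 0 ≤ k α) ∧ (∀ α, A α = false → k α = 0) ∧ ∀ i j, hypSum k i j = x i j := by
  classical
  have hsupp : incidence '' {α | A α = true} = ↑((univ.filter (A · = true)).image incidence) := by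
    simp
  rw [incidencePolytope, hsupp, mem_convexHull'] at hx
  obtain ⟨w, hw, -, rfl⟩ := hx
  refine ⟨fun α => if A α = true then w (incidence α) else 0, fun α => ?_, fun α hα => ?_,
    fun i j => ?_⟩
  · dsimp only
    split_ifs with hα
    · exact hw _ (mem_image_of_mem _ (by simpa using hα))
    · exact le_rfl
  · simp [hα]
  · rw [hypSum_eq_sum_mul_incidence, sum_image incidence_injective.injOn, sum_filter]
    simp [Finset.sum_apply, ite_mul, ite_apply]

lemma hypSum_const_mul (r : ℝ) (k : (Fin d → Fin n) → ℝ) (i : Fin d) (j : Fin n) :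
    hypSum (fun α => r * k α) i j = r * hypSum k i j :=
  (mul_sum ..).symm

lemma hasPolydiagonal_of_mem_incidencePolytope
    (hA : (fun _ _ => (n : ℝ)⁻¹) ∈ incidencePolytope A) : HasPolydiagonal A := by
  obtain ⟨k, hk_nonneg, hk_supp, hk_sum⟩ := exists_weights_of_mem_incidencePolytope hA
  refine ⟨fun α => n * k α, fun α => mul_nonneg n.cast_nonneg (hk_nonneg α),
    fun α hα => by simp [hk_supp α hα], fun i j => ?_⟩
  have hn : (n : ℝ) ≠ 0 := Nat.cast_ne_zero.2 j.pos.ne'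
  rw [hypSum_const_mul, hk_sum, mul_inv_cancel₀ hn]

lemma pos_of_not_hasPolydiagonal (hA : ¬ HasPolydiagonal A) : 0 < n := by
  refine Nat.pos_of_ne_zero fun hn => hA ?_
  subst hn
  exact ⟨0, fun _ => le_rfl, fun _ _ => rfl, fun _ j => j.elim0⟩

lemma linearMap_apply_eq_sum_sum_single {R M ι κ : Type*} [Semiring R] [AddCommMonoid M]
    [Module R M] [Fintype ι] [Fintype κ] [DecidableEq ι] [DecidableEq κ]
    (f : (ι → κ → R) →ₗ[R] M) (x : ι → κ → R) :
    f x = ∑ i, ∑ j, x i j • f (Pi.single i (Pi.single j 1)) := by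
  have hx : x = ∑ i, ∑ j, x i j • Pi.single i (Pi.single j 1) := by
    ext a b
    simp [Finset.sum_apply, Pi.single_apply, ite_apply]
  conv_lhs => rw [hx]
  simp only [map_sum, map_smul]

lemma exists_table_separating_support (hA : ¬ HasPolydiagonal A) :
    ∃ (c : Fin d → Fin n → ℝ) (u : ℝ),
      coverWeight c < n * u ∧ ∀ α, A α = true → u ≤ ∑ i, c i (α i) := by
  obtain ⟨f, u, hfu, huf⟩ := geometric_hahn_banach_point_closed (convex_convexHull ℝ _)
    isClosed_incidencePolytope (mt hasPolydiagonal_of_mem_incidencePolytope hA)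
  let c : Fin d → Fin n → ℝ := fun i j => f (Pi.single i (Pi.single j 1))
  have f_eq (x : Fin d → Fin n → ℝ) : f x = ∑ i, ∑ j, x i j * c i j :=
    linearMap_apply_eq_sum_sum_single f.toLinearMap x
  refine ⟨c, u, ?_, fun α hα => ?_⟩
  · have hn : (0 : ℝ) < n := Nat.cast_pos.2 (pos_of_not_hasPolydiagonal hA)
    simp only [f_eq, ← mul_sum] at hfu
    exact (inv_mul_lt_iff₀ hn).1 hfu
  · rw [← sum_sum_incidence_mul, ← f_eq]
    exact (huf _ (incidence_mem_incidencePolytope hα)).le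

/-- The sum over all directions `i` of the least entry `min_j c i j` of the table `c`; for
`n = 0` the rows are empty and the infima are `0`. -/
noncomputable def sumRowMin (c : Fin d → Fin n → ℝ) : ℝ := ∑ i, ⨅ j, c i j

/-- The table obtained from `c` by subtracting from each row its minimum and rescaling, so that
sums of at least `u` along an index become sums of at least `1`. -/
noncomputable def reduceRows (c : Fin d → Fin n → ℝ) (u : ℝ) : Fin d → Fin n → ℝ :=
  fun i j => (c i j - ⨅ j', c i j') / (u - sumRowMin c)

lemma iInf_row_le (c : Fin d → Fin n → ℝ) (i : Fin d) (j : Fin n) : ⨅ j', c i j' ≤ c i j :=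
  ciInf_le (Set.finite_range _).bddBelow j

lemma mul_sumRowMin_le_coverWeight (c : Fin d → Fin n → ℝ) :
    n * sumRowMin c ≤ coverWeight c := by
  rw [sumRowMin, coverWeight, mul_sum]
  refine sum_le_sum fun i _ => ?_
  calc n * ⨅ j, c i j = ∑ _j : Fin n, ⨅ j', c i j' := by simp
    _ ≤ ∑ j, c i j := sum_le_sum fun j _ => iInf_row_le c i j

lemma sumRowMin_lt {c : Fin d → Fin n → ℝ} {u : ℝ} (hc : coverWeight c < n * u) :
    sumRowMin c < u :=
  lt_of_mul_lt_mul_left ((mul_sumRowMin_le_coverWeight c).trans_lt hc) n.cast_nonneg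

lemma coverWeight_reduceRows (c : Fin d → Fin n → ℝ) (u : ℝ) :
    coverWeight (reduceRows c u) = (coverWeight c - n * sumRowMin c) / (u - sumRowMin c) := by
  simp [coverWeight, reduceRows, sumRowMin, ← sum_div, mul_sum]

lemma isCover_reduceRows {c : Fin d → Fin n → ℝ} {u : ℝ} (hu : sumRowMin c < u)
    (hc : ∀ α, A α = true → u ≤ ∑ i, c i (α i)) : IsCover A (reduceRows c u) := by
  have hpos : 0 < u - sumRowMin c := sub_pos.2 hu
  refine ⟨fun i j => div_nonneg (sub_nonneg.2 (iInf_row_le c i j)) hpos.le, fun α hα => ?_⟩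
  simp only [reduceRows]
  rw [← sum_div, one_le_div hpos, sum_sub_distrib]
  exact sub_le_sub_right (hc α hα) _

lemma exists_isCover_coverWeight_lt (hA : ¬ HasPolydiagonal A) :
    ∃ Λ, IsCover A Λ ∧ coverWeight Λ < n := by
  obtain ⟨c, u, hcu, hc⟩ := exists_table_separating_support hA
  have hu := sumRowMin_lt hcu
  refine ⟨reduceRows c u, isCover_reduceRows hu hc, ?_⟩
  rw [coverWeight_reduceRows, div_lt_iff₀ (sub_pos.2 hu)]
  linarith

lemma IsOptimalCover.sumRowMin_nonpos {Λ : Fin d → Fin n → ℝ} (hΛ : IsOptimalCover A Λ)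
    (hW : coverWeight Λ < n) : sumRowMin Λ ≤ 0 := by
  have hs : sumRowMin Λ < 1 := sumRowMin_lt (by simpa using hW)
  have hopt := hΛ.2 _ (isCover_reduceRows hs hΛ.1.2)
  rw [coverWeight_reduceRows, le_div_iff₀ (sub_pos.2 hs)] at hopt
  have hmul : (n - coverWeight Λ) * sumRowMin Λ ≤ 0 := by linarith
  exact nonpos_of_mul_nonpos_right hmul (sub_pos.2 hW)

lemma iInf_row_eq_zero_of_sumRowMin_nonpos {c : Fin d → Fin n → ℝ} (hc : ∀ i j, 0 ≤ c i j)
    (hs : sumRowMin c ≤ 0) (i : Fin d) : ⨅ j, c i j = 0 := by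
  have hmin (i : Fin d) : 0 ≤ ⨅ j, c i j := Real.iInf_nonneg (hc i)
  have hsum : sumRowMin c = 0 := hs.antisymm (sum_nonneg fun i _ => hmin i)
  exact (sum_eq_zero_iff_of_nonneg fun i _ => hmin i).1 hsum i (mem_univ i)

theorem stmt_3_general {Λ : Fin d → Fin n → ℝ} (hA : ¬ HasPolydiagonal A)
    (hΛ : IsOptimalCover A Λ) (i : Fin d) : ∃ j, Λ i j = 0 := by
  obtain ⟨Λ', hΛ', hW'⟩ := exists_isCover_coverWeight_lt hA
  have hW : coverWeight Λ < n := (hΛ.2 Λ' hΛ').trans_lt hW'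
  have : Nonempty (Fin n) := ⟨⟨0, pos_of_not_hasPolydiagonal hA⟩⟩
  obtain ⟨j, hj⟩ := exists_eq_ciInf_of_finite (f := Λ i)
  have hmin : ⨅ j, Λ i j = 0 :=
    iInf_row_eq_zero_of_sumRowMin_nonpos hΛ.1.1 (hΛ.sumRowMin_nonpos hW) i
  exact ⟨j, hj.trans hmin⟩

end

/-- In an optimal hyperplane cover of an extremal matrix of order 2, one of the two parallel
hyperplanes of each direction has weight 0. -/
theorem stmt_3 {d : ℕ} (A : (Fin d → Fin 2) → Bool) (Λ : Fin d → Fin 2 → ℝ)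
    (hA : IsExtremal A) (hΛ : IsOptimalCover A Λ) :
    ∀ i : Fin d, Λ i 0 = 0 ∨ Λ i 1 = 0 :=
  fun i => Fin.exists_fin_two.1 (stmt_3_general hA.1 hΛ i)
end

section
/- Let Λ₁ be the essential-weight tuple (13/25, 7/25, 6/25, 6/25, 4/25, 4/25, 4/25, 3/25, 2/25) and Λ₂ the tuple (13/25, 7/25, 6/25, 6/25, 4/25, 4/25, 4/25, 2/25, 3/25) (the last two coordinates interchanged). Then the 9-dimensional threshold matrices A(Λ₁) and A(Λ₂) of order 2 coincide; this matrix A is extremal; and both the d×2 tables corresponding to Λ₁ and to Λ₂ are optimal hyperplane covers of A. In particular, there exists an extremal matrix whose optimal hyperplane cover is not unique. -/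
/-!
Weak linear programming duality bounds the weight of every polyplex by the weight of every
hyperplane cover. For order `2` a polydiagonal is a polyplex of weight `2`, so a cover of weight
`49 / 25` excludes polydiagonals. Scaled by `25`, the essential weights are integers with odd sum
`49 = 2 * 25 - 1`: of an index and its antipode exactly one reaches the threshold `25`, hence any
new entry forms a polydiagonal together with its antipode.

Interchanging the weights `3` and `2` can only matter when the other weights contribute exactly
`22`, and no subset of `13, 7, 6, 6, 4, 4, 4` has that sum. Both tables are optimal because a single
polyplex attains the weight `49 / 25`.
-/

open Finset

/-- The first essential-weight tuple. -/
noncomputable def v₁ : Fin 9 → ℝ :=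
  ![13/25, 7/25, 6/25, 6/25, 4/25, 4/25, 4/25, 3/25, 2/25]

/-- The second essential-weight tuple: the last two coordinates interchanged. -/
noncomputable def v₂ : Fin 9 → ℝ :=
  ![13/25, 7/25, 6/25, 6/25, 4/25, 4/25, 4/25, 2/25, 3/25]

/-- The d×2 table corresponding to an essential-weight tuple. -/
noncomputable def tableOf {d : ℕ} (v : Fin d → ℝ) : Fin d → Fin 2 → ℝ :=
  fun i j => if j = 0 then v i else 0

section Duality

variable {d n : ℕ} {A : (Fin d → Fin n) → Bool} {k : (Fin d → Fin n) → ℝ} {Λ : Fin d → Fin n → ℝ}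
  {W : ℝ}

lemma sum_hypSum (k : (Fin d → Fin n) → ℝ) (i : Fin d) : ∑ j, hypSum k i j = ∑ α, k α :=
  Finset.sum_fiberwise _ _ _

lemma sum_mul_sum_eq_sum_mul_hypSum (k : (Fin d → Fin n) → ℝ) (Λ : Fin d → Fin n → ℝ) :
    ∑ α, k α * ∑ i, Λ i (α i) = ∑ i, ∑ j, Λ i j * hypSum k i j := by
  simp only [Finset.mul_sum]
  rw [Finset.sum_comm]
  refine Finset.sum_congr rfl fun i _ => ?_
  rw [← Finset.sum_fiberwise _ (fun α : Fin d → Fin n => α i)]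
  refine Finset.sum_congr rfl fun j _ => ?_
  rw [hypSum, Finset.mul_sum]
  refine Finset.sum_congr rfl fun α hα => ?_
  rw [(Finset.mem_filter.mp hα).2, mul_comm]

lemma IsPolyplex.le_coverWeight (hk : IsPolyplex A k W) (hΛ : IsCover A Λ) :
    W ≤ coverWeight Λ := by
  obtain ⟨k_nonneg, k_supp, k_le, rfl⟩ := hk
  obtain ⟨Λ_nonneg, Λ_cover⟩ := hΛ
  calc ∑ α, k α ≤ ∑ α, k α * ∑ i, Λ i (α i) := by
        refine Finset.sum_le_sum fun α _ => ?_
        cases hα : A α with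
        | false => simp [k_supp α hα]
        | true => exact le_mul_of_one_le_right (k_nonneg α) (Λ_cover α hα)
    _ = ∑ i, ∑ j, Λ i j * hypSum k i j := sum_mul_sum_eq_sum_mul_hypSum k Λ
    _ ≤ ∑ i, ∑ j, Λ i j := by
        gcongr with i _ j _
        exact mul_le_of_le_one_right (Λ_nonneg i j) (k_le i j)

lemma IsPolydiagonal.isPolyplex [NeZero d] (hk : IsPolydiagonal A k) : IsPolyplex A k n := by
  obtain ⟨k_nonneg, k_supp, k_eq⟩ := hk
  refine ⟨k_nonneg, k_supp, fun i j => (k_eq i j).le, ?_⟩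
  simp [← sum_hypSum k 0, k_eq]

lemma IsCover.not_hasPolydiagonal [NeZero d] (hΛ : IsCover A Λ) (hlt : coverWeight Λ < n) :
    ¬ HasPolydiagonal A :=
  fun ⟨_, hk⟩ => (hk.isPolyplex.le_coverWeight hΛ).not_gt hlt

lemma IsCover.isOptimalCover (hΛ : IsCover A Λ) (hk : IsPolyplex A k (coverWeight Λ)) :
    IsOptimalCover A Λ :=
  ⟨hΛ, fun _ => hk.le_coverWeight⟩

end Duality

section PointMass

variable {ι X : Type*} [Fintype ι] [DecidableEq X] {w : ι → ℝ}

/-- The finitely supported weighting `∑ m, w m • δ_{p m}`, by which polyplexes and polydiagonals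
are given explicitly; the points `p m` may repeat. -/
def pointMass (p : ι → X) (w : ι → ℝ) : X → ℝ :=
  fun x => ∑ m with p m = x, w m

lemma pointMass_nonneg {p : ι → X} (hw : ∀ m, 0 ≤ w m) (x : X) : 0 ≤ pointMass p w x :=
  Finset.sum_nonneg fun m _ => hw m

lemma pointMass_eq_zero {p : ι → X} {x : X} (hx : ∀ m, p m ≠ x) : pointMass p w x = 0 := by
  simp [pointMass, hx]

lemma sum_pointMass [Fintype X] (p : ι → X) (w : ι → ℝ) : ∑ x, pointMass p w x = ∑ m, w m :=
  Finset.sum_fiberwise _ _ _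

variable {d n : ℕ} {A : (Fin d → Fin n) → Bool} {p : ι → Fin d → Fin n}

lemma hypSum_pointMass (p : ι → Fin d → Fin n) (w : ι → ℝ) (i : Fin d) (j : Fin n) :
    hypSum (pointMass p w) i j = ∑ m with p m i = j, w m := by
  unfold hypSum pointMass
  rw [← Finset.sum_fiberwise_of_maps_to (g := p) (t := {α | α i = j}) (by simp)]
  refine Finset.sum_congr rfl fun α hα => ?_
  exact Finset.sum_congr (by grind) fun _ _ => rfl

lemma pointMass_eq_zero_of_apply_eq_false (hp : ∀ m, A (p m) = true) (α : Fin d → Fin n)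
    (hα : A α = false) : pointMass p w α = 0 :=
  pointMass_eq_zero fun m hm => by simp [← hm, hp m] at hα

lemma isPolyplex_pointMass (hw : ∀ m, 0 ≤ w m) (hp : ∀ m, A (p m) = true)
    (hle : ∀ i j, ∑ m with p m i = j, w m ≤ 1) : IsPolyplex A (pointMass p w) (∑ m, w m) :=
  ⟨pointMass_nonneg hw, pointMass_eq_zero_of_apply_eq_false hp,
    fun i j => (hypSum_pointMass p w i j).trans_le (hle i j), sum_pointMass p w⟩

lemma isPolydiagonal_pointMass (hw : ∀ m, 0 ≤ w m) (hp : ∀ m, A (p m) = true)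
    (heq : ∀ i j, ∑ m with p m i = j, w m = 1) : IsPolydiagonal A (pointMass p w) :=
  ⟨pointMass_nonneg hw, pointMass_eq_zero_of_apply_eq_false hp,
    fun i j => (hypSum_pointMass p w i j).trans (heq i j)⟩

end PointMass

section AddEntry

variable {d n : ℕ} {A : (Fin d → Fin n) → Bool}

lemma addEntry_self (A : (Fin d → Fin n) → Bool) (β : Fin d → Fin n) : addEntry A β β = true :=
  if_pos rfl

lemma addEntry_eq_true {α : Fin d → Fin n} (β : Fin d → Fin n) (hα : A α = true) :
    addEntry A β α = true := by
  simp [addEntry, hα]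

end AddEntry

section Antipode

variable {d : ℕ} {A : (Fin d → Fin 2) → Bool}

lemma rev_eq_iff_ne : ∀ {a b : Fin 2}, a.rev = b ↔ a ≠ b := by
  decide

lemma hasPolydiagonal_of_antipodal {β : Fin d → Fin 2} (hβ : A β = true)
    (hrev : A (Fin.rev ∘ β) = true) : HasPolydiagonal A := by
  refine ⟨_, isPolydiagonal_pointMass (p := ![β, Fin.rev ∘ β]) (w := 1)
    (fun _ => zero_le_one) (by simp [Fin.forall_fin_two, hβ, hrev]) fun i j => ?_⟩
  simp only [Finset.sum_filter, Fin.sum_univ_two, Matrix.cons_val_zero, Matrix.cons_val_one,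
    Function.comp_apply, Pi.one_apply, rev_eq_iff_ne]
  by_cases h : β i = j <;> simp [h]

lemma IsCover.isExtremal_of_antipodal [NeZero d] {Λ : Fin d → Fin 2 → ℝ} (hΛ : IsCover A Λ)
    (hlt : coverWeight Λ < 2) (hA : ∀ β, A β = false → A (Fin.rev ∘ β) = true) : IsExtremal A :=
  ⟨hΛ.not_hasPolydiagonal hlt, fun β hβ =>
    hasPolydiagonal_of_antipodal (addEntry_self A β) (addEntry_eq_true β (hA β hβ))⟩

end Antipode

lemma tableOf_injective {d : ℕ} : Function.Injective (tableOf (d := d)) :=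
  fun v v' h => funext fun i => by simpa [tableOf] using congrFun₂ h i 0

section IntegerThreshold

variable {d : ℕ} {A : (Fin d → Fin 2) → Bool} {w : Fin d → ℕ} {q : ℕ}

/-- The weight that an integer-valued essential-weight tuple `w` gives to the index `α`: only the
hyperplanes `Γ_{i,0}` carry weight. -/
def zeroWeight (w : Fin d → ℕ) (α : Fin d → Fin 2) : ℕ :=
  ∑ i with α i = 0, w i

lemma zeroWeight_add_zeroWeight_rev (w : Fin d → ℕ) (α : Fin d → Fin 2) :
    zeroWeight w α + zeroWeight w (Fin.rev ∘ α) = ∑ i, w i := by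
  simp only [zeroWeight, Function.comp_apply, rev_eq_iff_ne, Finset.sum_filter_add_sum_filter_not]

lemma sum_tableOf_div (w : Fin d → ℕ) (q : ℕ) (α : Fin d → Fin 2) :
    ∑ i, tableOf (fun i => (w i / q : ℝ)) i (α i) = zeroWeight w α / q := by
  simp only [tableOf, zeroWeight, ← Finset.sum_filter, ← Finset.sum_div, Nat.cast_sum]

lemma one_le_sum_tableOf_div_iff (hq : 0 < q) (α : Fin d → Fin 2) :
    1 ≤ ∑ i, tableOf (fun i => (w i / q : ℝ)) i (α i) ↔ q ≤ zeroWeight w α := by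
  rw [sum_tableOf_div, one_le_div (Nat.cast_pos.mpr hq), Nat.cast_le]

lemma coverWeight_tableOf_div (w : Fin d → ℕ) (q : ℕ) :
    coverWeight (tableOf fun i => (w i / q : ℝ)) = (∑ i, w i : ℕ) / q := by
  simp [coverWeight, tableOf, ← Finset.sum_div]

lemma isCover_tableOf_div (hq : 0 < q) (hA : ∀ α, A α = true → q ≤ zeroWeight w α) :
    IsCover A (tableOf fun i => (w i / q : ℝ)) := by
  refine ⟨fun i j => ?_, fun α hα => (one_le_sum_tableOf_div_iff hq α).mpr (hA α hα)⟩
  unfold tableOf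
  split_ifs <;> positivity

lemma isExtremal_of_sum_add_one_eq (hw : ∑ i, w i + 1 = 2 * q)
    (hA : ∀ α, A α = true ↔ q ≤ zeroWeight w α) : IsExtremal A := by
  have hq : 0 < q := by omega
  have : NeZero d := ⟨by rintro rfl; rw [Fin.sum_univ_zero] at hw; omega⟩
  refine (isCover_tableOf_div hq fun α => (hA α).mp).isExtremal_of_antipodal ?_ fun β hβ => ?_
  · rw [coverWeight_tableOf_div, div_lt_iff₀ (Nat.cast_pos.mpr hq)]
    exact_mod_cast Nat.lt_of_succ_le hw.le
  · have hβ' : zeroWeight w β < q := by simpa [hβ] using (hA β).not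
    have := zeroWeight_add_zeroWeight_rev w β
    rw [hA]
    omega

lemma isOptimalCover_tableOf_div {ι : Type*} [Fintype ι] {p : ι → Fin d → Fin 2} {u : ι → ℕ}
    (hq : 0 < q) (hA : ∀ α, A α = true → q ≤ zeroWeight w α) (hp : ∀ m, A (p m) = true)
    (hle : ∀ i j, ∑ m with p m i = j, u m ≤ q) (hsum : ∑ m, u m = ∑ i, w i) :
    IsOptimalCover A (tableOf fun i => (w i / q : ℝ)) := by
  have hdual : IsPolyplex A (pointMass p fun m => (u m / q : ℝ)) (∑ m, (u m / q : ℝ)) := by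
    refine isPolyplex_pointMass (fun m => by positivity) hp fun i j => ?_
    rw [← Finset.sum_div, div_le_one (Nat.cast_pos.mpr hq)]
    exact_mod_cast hle i j
  refine (isCover_tableOf_div hq hA).isOptimalCover (k := pointMass p fun m => (u m / q : ℝ)) ?_
  rwa [coverWeight_tableOf_div, ← hsum, Nat.cast_sum, Finset.sum_div]

lemma zeroWeight_eq_sum_compl_pair {a b : Fin d} (hab : a ≠ b) (w : Fin d → ℕ)
    (α : Fin d → Fin 2) :
    zeroWeight w α = ∑ i ∈ {a, b}ᶜ with α i = 0, w i +
      ((if α a = 0 then w a else 0) + (if α b = 0 then w b else 0)) := by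
  rw [zeroWeight, Finset.sum_filter, ← Finset.sum_compl_add_sum {a, b}, Finset.sum_pair hab,
    Finset.sum_filter]

lemma le_zeroWeight_comp_swap_iff {a b : Fin d} (hab : w a = w b + 1)
    (hq : ∀ S ⊆ ({a, b}ᶜ : Finset (Fin d)), ∑ i ∈ S, w i + w a ≠ q) (α : Fin d → Fin 2) :
    q ≤ zeroWeight (w ∘ Equiv.swap a b) α ↔ q ≤ zeroWeight w α := by
  have hne : a ≠ b := by rintro rfl; omega
  have hrest : ∑ i ∈ {a, b}ᶜ with α i = 0, (w ∘ Equiv.swap a b) i =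
      ∑ i ∈ {a, b}ᶜ with α i = 0, w i := by
    refine Finset.sum_congr rfl fun i hi => ?_
    simp only [Finset.mem_filter, Finset.mem_compl, Finset.mem_insert, Finset.mem_singleton,
      not_or] at hi
    rw [Function.comp_apply, Equiv.swap_apply_of_ne_of_ne hi.1.1 hi.1.2]
  have hrest_ne := hq _ (Finset.filter_subset (fun i => α i = 0) {a, b}ᶜ)
  rw [zeroWeight_eq_sum_compl_pair hne, zeroWeight_eq_sum_compl_pair hne, hrest,
    Function.comp_apply, Function.comp_apply, Equiv.swap_apply_left, Equiv.swap_apply_right]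
  split_ifs <;> omega

end IntegerThreshold

/-- The tuple `v₁` scaled by `25`. -/
def scaledWeight : Fin 9 → ℕ :=
  ![13, 7, 6, 6, 4, 4, 4, 3, 2]

lemma v₁_eq_scaledWeight_div : v₁ = fun i => (scaledWeight i / (25 : ℕ) : ℝ) := by
  ext i
  fin_cases i <;> simp [v₁, scaledWeight]

lemma v₂_eq_scaledWeight_swap_div :
    v₂ = fun i => ((scaledWeight ∘ Equiv.swap 7 8) i / (25 : ℕ) : ℝ) := by
  ext i
  fin_cases i <;> simp [v₂, scaledWeight, Equiv.swap_apply_def]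

lemma v₁_ne_v₂ : v₁ ≠ v₂ := fun h => by
  have h7 : (3 / 25 : ℝ) = 2 / 25 := congrFun h 7
  norm_num at h7

lemma sum_scaledWeight_add_ne :
    ∀ S ⊆ ({7, 8}ᶜ : Finset (Fin 9)), ∑ i ∈ S, scaledWeight i + scaledWeight 7 ≠ 25 := by
  decide +kernel

/-- The support of an optimal polyplex: eight indices of `scaledWeight`-weight exactly `25`. -/
def dualPoint : Fin 8 → Fin 9 → Fin 2 :=
  ![![1, 1, 0, 0, 1, 0, 0, 0, 0],
    ![1, 1, 0, 0, 0, 1, 0, 0, 0],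
    ![1, 1, 0, 0, 0, 0, 1, 0, 0],
    ![1, 0, 1, 0, 0, 0, 0, 1, 1],
    ![1, 0, 0, 1, 0, 0, 0, 1, 1],
    ![0, 1, 1, 1, 0, 0, 0, 1, 1],
    ![0, 1, 0, 0, 1, 1, 1, 1, 1],
    ![0, 0, 1, 1, 1, 1, 1, 0, 0]]

/-- The weights of an optimal polyplex on `dualPoint`, scaled by `25`: they solve the system saying
that every hyperplane `Γ_{i,0}` is saturated. -/
def dualWeight : Fin 8 → ℕ :=
  ![4, 4, 4, 6, 6, 5, 7, 13]

lemma zeroWeight_dualPoint : ∀ m, zeroWeight scaledWeight (dualPoint m) = 25 := by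
  decide

lemma sum_dualWeight_le : ∀ i j, ∑ m with dualPoint m i = j, dualWeight m ≤ 25 := by
  decide

/-- The threshold matrices A(Λ₁) and A(Λ₂) coincide, this matrix is extremal, and both
tables are optimal hyperplane covers of it (which are distinct): an extremal matrix whose
optimal hyperplane cover is not unique. -/
theorem stmt_8 (A B : (Fin 9 → Fin 2) → Bool)
    (hA : ∀ α, A α = true ↔ 1 ≤ ∑ i, tableOf v₁ i (α i))
    (hB : ∀ α, B α = true ↔ 1 ≤ ∑ i, tableOf v₂ i (α i)) :
    A = B ∧ IsExtremal A ∧ IsOptimalCover A (tableOf v₁) ∧ IsOptimalCover A (tableOf v₂) ∧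
      tableOf v₁ ≠ tableOf v₂ := by
  have hq : 0 < 25 := by norm_num
  simp only [v₁_eq_scaledWeight_div, one_le_sum_tableOf_div_iff hq] at hA
  simp only [v₂_eq_scaledWeight_swap_div, one_le_sum_tableOf_div_iff hq] at hB
  obtain rfl : A = B := by
    funext α
    rw [Bool.eq_iff_iff, hA, hB, le_zeroWeight_comp_swap_iff rfl sum_scaledWeight_add_ne]
  have hdual : ∀ m, A (dualPoint m) = true := fun m => (hA _).mpr (zeroWeight_dualPoint m).ge
  refine ⟨rfl, isExtremal_of_sum_add_one_eq (by decide) hA, ?_, ?_, tableOf_injective.ne v₁_ne_v₂⟩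
  · rw [v₁_eq_scaledWeight_div]
    exact isOptimalCover_tableOf_div hq (fun α => (hA α).mp) hdual sum_dualWeight_le (by decide)
  · rw [v₂_eq_scaledWeight_swap_div]
    exact isOptimalCover_tableOf_div hq (fun α => (hB α).mp) hdual sum_dualWeight_le (by decide)
end
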